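/- Watson's identities: G(q)G(q⁴)+qH(q)H(q⁴) = φ(q)/f(q²)² · f(q²), precisely G(q)G(q⁴)+qH(q)H(q⁴) = φ(q)/(q²;q²)_∞ and G(q)G(q⁴)−qH(q)H(q⁴) = φ(q⁵)/(q²;q²)_∞, where φ(q)=∑_{n∈ℤ}q^{n²}. -/

import Mathlib

/-- Rogers–Ramanujan series `G` in product form: `G(q) = 1/((q;q⁵)_∞ (q⁴;q⁵)_∞)`. -/
noncomputable def RRG (q : ℂ) : ℂ :=
  1 / ((∏' k : ℕ, (1 - q ^ (5 * k + 1))) * ∏' k : ℕ, (1 - q ^ (5 * k + 4)))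

/-- Rogers–Ramanujan series `H` in product form: `H(q) = 1/((q²;q⁵)_∞ (q³;q⁵)_∞)`. -/
noncomputable def RRH (q : ℂ) : ℂ :=
  1 / ((∏' k : ℕ, (1 - q ^ (5 * k + 2))) * ∏' k : ℕ, (1 - q ^ (5 * k + 3)))

/-- Ramanujan's theta function `φ(q) = ∑_{n ∈ ℤ} q^(n²)`. -/
noncomputable def rphi (q : ℂ) : ℂ := ∑' n : ℤ, q ^ (n ^ 2)

open Filter Topology

/-- triangular numbers -/
def tri (n : ℤ) : ℤ := n * (n - 1) / 2

lemma two_tri (n : ℤ) : 2 * tri n = n * (n - 1) := by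
  have : (2:ℤ) ∣ n * (n - 1) := (Int.even_mul_pred_self n).two_dvd
  exact Int.mul_ediv_cancel' this

lemma tri_succ (n : ℤ) : tri (n + 1) = tri n + n := by
  have h1 := two_tri n
  have h2 := two_tri (n + 1)
  nlinarith

lemma tri_pred (n : ℤ) : tri (n - 1) = tri n - (n - 1) := by
  have h1 := two_tri n
  have h2 := two_tri (n - 1)
  nlinarith

/-- finite `(Q;Q)_n` -/
noncomputable def qp (Q : ℂ) (n : ℕ) : ℂ := ∏ k ∈ Finset.range n, (1 - Q ^ (k + 1))

noncomputable def rr (Q : ℂ) (m : ℤ) : ℂ := if 0 ≤ m then (qp Q m.toNat)⁻¹ else 0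

lemma one_sub_pow_ne {Q : ℂ} (hQ : ‖Q‖ < 1) (k : ℕ) (hk : k ≠ 0) : 1 - Q ^ k ≠ 0 := by
  intro h
  have h1 : ‖Q ^ k‖ = 1 := by
    rw [← sub_eq_zero.mp h]; simp
  rw [norm_pow] at h1
  have := pow_lt_one₀ (norm_nonneg Q) hQ hk
  linarith

lemma qp_ne {Q : ℂ} (hQ : ‖Q‖ < 1) (n : ℕ) : qp Q n ≠ 0 :=
  Finset.prod_ne_zero_iff.mpr fun k _ => one_sub_pow_ne hQ _ (by omega)

lemma rr_rec {Q : ℂ} (hQ : ‖Q‖ < 1) (m : ℤ) : rr Q (m - 1) = (1 - Q ^ m) * rr Q m := by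
  unfold rr
  rcases lt_trichotomy m 0 with h | h | h
  · rw [if_neg (by omega), if_neg (by omega)]; simp
  · subst h; simp
  · rw [if_pos (by omega), if_pos (by omega)]
    obtain ⟨k, rfl⟩ : ∃ k : ℕ, m = k + 1 := ⟨(m - 1).toNat, by omega⟩
    have e1 : ((k:ℤ) + 1 - 1).toNat = k := by omega
    have e2 : ((k:ℤ) + 1).toNat = k + 1 := by omega
    rw [e1, e2]
    have h1 := qp_ne hQ k
    have h2 := one_sub_pow_ne hQ (k + 1) (by omega)
    have e3 : qp Q (k + 1) = qp Q k * (1 - Q ^ (k + 1)) := by simp [qp, Finset.prod_range_succ]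
    have e4 : Q ^ ((k:ℤ) + 1) = Q ^ (k + 1) := by exact_mod_cast zpow_natCast Q (k + 1)
    rw [e3, e4]
    field_simp

noncomputable def cc (Q : ℂ) (n : ℕ) (j : ℤ) : ℂ := qp Q (2 * n) * rr Q (n + j) * rr Q (n - j)

lemma cc_rec {Q : ℂ} (hQ : ‖Q‖ < 1) (h0 : Q ≠ 0) (n : ℕ) (j : ℤ) :
    cc Q (n + 1) j = (1 + Q ^ (2 * n + 1)) * cc Q n j + Q ^ ((n:ℤ) + 1 - j) * cc Q n (j - 1)
      + Q ^ ((n:ℤ) + 1 + j) * cc Q n (j + 1) := by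
  unfold cc
  have e : qp Q (2 * (n + 1)) = qp Q (2 * n) * (1 - Q ^ (2 * n + 1)) * (1 - Q ^ (2 * n + 2)) := by
    simp [qp, Finset.prod_range_succ, mul_add]
  obtain ⟨a, ha⟩ : ∃ a : ℤ, a = n + 1 + j := ⟨_, rfl⟩
  obtain ⟨b, hb⟩ : ∃ b : ℤ, b = n + 1 - j := ⟨_, rfl⟩
  have p1 : Q ^ (2 * n + 2) = Q ^ a * Q ^ b := by
    rw [← zpow_add₀ h0, ← zpow_natCast]; congr 1; push_cast; omega
  have p2 : Q ^ (2 * n + 1) = Q ^ a * Q ^ b / Q := by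
    rw [← p1]; field_simp; ring
  rw [e, p1, p2]
  have q1 : ((n + 1 : ℕ) : ℤ) + j = a := by push_cast; omega
  have q2 : ((n + 1 : ℕ) : ℤ) - j = b := by push_cast; omega
  have q3 : (n:ℤ) + j = a - 1 := by omega
  have q4 : (n:ℤ) - j = b - 1 := by omega
  have q5 : (n:ℤ) + (j - 1) = a - 1 - 1 := by omega
  have q6 : (n:ℤ) - (j - 1) = b := by omega
  have q7 : (n:ℤ) + (j + 1) = a := by omega
  have q8 : (n:ℤ) - (j + 1) = b - 1 - 1 := by omega
  rw [q1, q2, q3, q4, q5, q6, q7, q8, ← ha, ← hb]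
  rw [rr_rec hQ (a - 1), rr_rec hQ (b - 1), rr_rec hQ a, rr_rec hQ b, zpow_sub_one₀ h0, zpow_sub_one₀ h0]
  field_simp
  ring

lemma finite_jtp {Q x : ℂ} (hQ : ‖Q‖ < 1) (h0 : Q ≠ 0) (hx : x ≠ 0) (n : ℕ) :
    HasSum (fun j : ℤ => cc Q n j * (Q ^ tri j * x ^ j))
      (∏ k ∈ Finset.range n, ((1 + x * Q ^ k) * (1 + x⁻¹ * Q ^ (k + 1)))) := by
  induction n with
  | zero =>
    have := hasSum_single (f := fun j : ℤ => cc Q 0 j * (Q ^ tri j * x ^ j)) 0 (by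
      intro j hj
      have : cc Q 0 j = 0 := by
        unfold cc rr
        rcases lt_or_gt_of_ne hj with h | h
        · rw [if_neg (by simpa using h)]; simp
        · rw [if_neg (c := 0 ≤ ((0:ℕ):ℤ) - j) (by simpa using h)]; simp
      simp [this])
    simpa [cc, rr, qp, tri] using this
  | succ n ih =>
    rw [Finset.prod_range_succ]
    have h1 := ih.mul_left (1 + Q ^ (2 * n + 1))
    have h2 := ((Equiv.addRight (-1 : ℤ)).hasSum_iff.mpr ih).mul_left (x * Q ^ n)
    have h3 := ((Equiv.addRight (1 : ℤ)).hasSum_iff.mpr ih).mul_left (x⁻¹ * Q ^ (n + 1))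
    have h4 := (h1.add h2).add h3
    have ev : (∏ k ∈ Finset.range n, ((1 + x * Q ^ k) * (1 + x⁻¹ * Q ^ (k + 1)))) *
        ((1 + x * Q ^ n) * (1 + x⁻¹ * Q ^ (n + 1))) =
        (1 + Q ^ (2 * n + 1)) * (∏ k ∈ Finset.range n, ((1 + x * Q ^ k) * (1 + x⁻¹ * Q ^ (k + 1)))) +
        x * Q ^ n * (∏ k ∈ Finset.range n, ((1 + x * Q ^ k) * (1 + x⁻¹ * Q ^ (k + 1)))) +
        x⁻¹ * Q ^ (n + 1) * (∏ k ∈ Finset.range n, ((1 + x * Q ^ k) * (1 + x⁻¹ * Q ^ (k + 1)))) := by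
      generalize (∏ k ∈ Finset.range n, ((1 + x * Q ^ k) * (1 + x⁻¹ * Q ^ (k + 1)))) = R
      field_simp
      ring
    rw [ev]
    refine (congrArg (fun f => HasSum f _) ?_).mpr h4
    funext j
    simp only [Function.comp, Equiv.coe_addRight, ← sub_eq_add_neg]
    rw [cc_rec hQ h0, tri_succ, tri_pred, zpow_sub_one₀ hx, zpow_add_one₀ hx, zpow_add₀ h0 _ j,
      zpow_sub₀ h0 (tri j), zpow_sub_one₀ h0, zpow_sub₀ h0, zpow_add₀ h0 _ j, zpow_add_one₀ h0,
      zpow_natCast]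
    field_simp
    ring

lemma summable_theta {Q x : ℂ} (hQ : ‖Q‖ < 1) (h0 : Q ≠ 0) (hx : x ≠ 0) :
    Summable (fun j : ℤ => ‖Q ^ tri j * x ^ j‖) := by
  have hlim : Tendsto (fun n : ℕ => ‖Q‖ ^ n) atTop (𝓝 0) :=
    tendsto_pow_atTop_nhds_zero_of_lt_one (norm_nonneg _) hQ
  apply Summable.of_nat_of_neg
  · apply summable_of_ratio_test_tendsto_lt_one (l := 0) zero_lt_one
    · exact Eventually.of_forall fun n => by simp [h0, hx, zpow_ne_zero]
    · have : Tendsto (fun n : ℕ => ‖Q‖ ^ n * ‖x‖) atTop (𝓝 0) := by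
        simpa using hlim.mul_const ‖x‖
      refine this.congr fun n => ?_
      have hQ' : ‖Q‖ ≠ 0 := by simpa
      have hx' : ‖x‖ ≠ 0 := by simpa
      push_cast
      simp only [norm_norm]
      rw [tri_succ, zpow_add₀ h0, zpow_add_one₀ hx, zpow_natCast]
      simp only [norm_mul, norm_pow, norm_zpow]
      field_simp
  · apply summable_of_ratio_test_tendsto_lt_one (l := 0) zero_lt_one
    · exact Eventually.of_forall fun n => by simp [h0, hx, zpow_ne_zero]
    · have : Tendsto (fun n : ℕ => ‖Q‖ ^ n * (‖Q‖ * ‖x‖⁻¹)) atTop (𝓝 0) := by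
        simpa using hlim.mul_const (‖Q‖ * ‖x‖⁻¹)
      refine this.congr fun n => ?_
      have hQ' : ‖Q‖ ≠ 0 := by simpa
      have hx' : ‖x‖ ≠ 0 := by simpa
      have e : (-((n + 1 : ℕ) : ℤ)) = -(n:ℤ) - 1 := by push_cast; ring
      have e2 : tri (-(n:ℤ)) - (-(n:ℤ) - 1) = tri (-(n:ℤ)) + ((n + 1 : ℕ) : ℤ) := by push_cast; ring
      simp only [norm_norm]
      rw [e, tri_pred, e2, zpow_add₀ h0, zpow_sub_one₀ hx, zpow_natCast]
      simp only [norm_mul, norm_pow, norm_zpow, norm_inv]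
      field_simp
      rw [pow_succ]

/-- the products `∏ (1 + c q^(mk+a))` -/
noncomputable def pr (c q : ℂ) (m a : ℕ) : ℂ := ∏' k : ℕ, (1 + c * q ^ (m * k + a))

lemma summable_pr (c : ℂ) {q : ℂ} (hq : ‖q‖ < 1) {m : ℕ} (hm : 0 < m) (a : ℕ) :
    Summable (fun k : ℕ => ‖c * q ^ (m * k + a)‖) := by
  have h1 : ‖q ^ m‖ < 1 := by
    rw [norm_pow]; exact pow_lt_one₀ (norm_nonneg _) hq hm.ne'
  have := (summable_geometric_of_lt_one (norm_nonneg _) h1).mul_left (‖c‖ * ‖q‖ ^ a)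
  refine this.congr fun k => ?_
  simp only [norm_mul, norm_pow]
  ring

lemma multipliable_pr (c : ℂ) {q : ℂ} (hq : ‖q‖ < 1) {m : ℕ} (hm : 0 < m) (a : ℕ) :
    Multipliable (fun k : ℕ => 1 + c * q ^ (m * k + a)) :=
  multipliable_one_add_of_summable (summable_pr c hq hm a)

lemma tendsto_pr (c : ℂ) {q : ℂ} (hq : ‖q‖ < 1) {m : ℕ} (hm : 0 < m) (a : ℕ) :
    Tendsto (fun n => ∏ k ∈ Finset.range n, (1 + c * q ^ (m * k + a))) atTop (𝓝 (pr c q m a)) :=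
  (multipliable_pr c hq hm a).tendsto_prod_tprod_nat

lemma pr_ne {c q : ℂ} (hc : ‖c‖ ≤ 1) (hq : ‖q‖ < 1) {m a : ℕ} (hm : 0 < m) (ha : 0 < a) :
    pr c q m a ≠ 0 := by
  apply tprod_one_add_ne_zero_of_summable _ (summable_pr c hq hm a)
  intro k h
  have h1 : ‖c * q ^ (m * k + a)‖ = 1 := by
    rw [(eq_neg_of_add_eq_zero_right h)]; simp
  rw [norm_mul, norm_pow] at h1
  have := pow_lt_one₀ (norm_nonneg q) hq (show m * k + a ≠ 0 by omega)
  nlinarith [norm_nonneg c, pow_nonneg (norm_nonneg q) (m * k + a)]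

lemma tendsto_qp {Q : ℂ} (hQ : ‖Q‖ < 1) : Tendsto (qp Q) atTop (𝓝 (pr (-1) Q 1 1)) := by
  have := tendsto_pr (-1) hQ one_pos 1
  change Tendsto (fun n => qp Q n) atTop _
  simpa [qp, ← sub_eq_add_neg] using this

theorem jtp {Q x : ℂ} (hQ : ‖Q‖ < 1) (h0 : Q ≠ 0) (hx : x ≠ 0) :
    ∑' j : ℤ, Q ^ tri j * x ^ j = pr (-1) Q 1 1 * pr x Q 1 0 * pr x⁻¹ Q 1 1 := by
  have hP : pr (-1) Q 1 1 ≠ 0 := pr_ne (by simp) hQ one_pos one_pos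
  have hqp := tendsto_qp hQ
  obtain ⟨C1, hC1⟩ := hqp.norm.bddAbove_range
  obtain ⟨C2, hC2⟩ := (hqp.inv₀ hP).norm.bddAbove_range
  have b1 : ∀ n, ‖qp Q n‖ ≤ C1 := fun n => hC1 ⟨n, rfl⟩
  have b2 : ∀ n, ‖(qp Q n)⁻¹‖ ≤ C2 := fun n => hC2 ⟨n, rfl⟩
  have c1 : 0 ≤ C1 := (norm_nonneg _).trans (b1 0)
  have c2 : 0 ≤ C2 := (norm_nonneg _).trans (b2 0)
  have b3 : ∀ m, ‖rr Q m‖ ≤ C2 := by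
    intro m
    unfold rr
    split_ifs
    · exact b2 _
    · simpa using c2
  have b4 : ∀ n j, ‖cc Q n j‖ ≤ C1 * C2 * C2 := by
    intro n j
    unfold cc
    rw [norm_mul, norm_mul]
    have := b1 (2 * n)
    have := b3 (n + j)
    have := b3 (n - j)
    gcongr
  have lim_rr : ∀ j : ℤ, Tendsto (fun n : ℕ => rr Q (n + j)) atTop (𝓝 (pr (-1) Q 1 1)⁻¹) := by
    intro j
    have h1 : Tendsto (fun n : ℕ => ((n:ℤ) + j).toNat) atTop atTop := by
      apply tendsto_atTop.mpr
      intro b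
      filter_upwards [eventually_ge_atTop (b + j.natAbs)] with n hn
      omega
    refine ((hqp.inv₀ hP).comp h1).congr' ?_
    filter_upwards [eventually_ge_atTop (j.natAbs)] with n hn
    simp only [Function.comp, rr]
    rw [if_pos (by omega)]
  have lim_cc : ∀ j : ℤ, Tendsto (fun n : ℕ => cc Q n j) atTop (𝓝 (pr (-1) Q 1 1)⁻¹) := by
    intro j
    have h1 : Tendsto (fun n : ℕ => qp Q (2 * n)) atTop (𝓝 (pr (-1) Q 1 1)) :=
      hqp.comp (tendsto_id.const_mul_atTop' two_pos)
    have := (h1.mul (lim_rr j)).mul (lim_rr (-j))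
    rw [mul_inv_cancel₀ hP, one_mul] at this
    exact this
  have L := tendsto_tsum_of_dominated_convergence
    (f := fun (n : ℕ) (j : ℤ) => cc Q n j * (Q ^ tri j * x ^ j))
    (g := fun j : ℤ => (pr (-1) Q 1 1)⁻¹ * (Q ^ tri j * x ^ j))
    ((summable_theta hQ h0 hx).mul_left (C1 * C2 * C2))
    (fun j => (lim_cc j).mul_const _)
    (Eventually.of_forall fun n j => by
      rw [norm_mul]
      exact mul_le_mul_of_nonneg_right (b4 n j) (norm_nonneg _))
  have R := (tendsto_pr x hQ one_pos 0).mul (tendsto_pr x⁻¹ hQ one_pos 1)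
  have := tendsto_nhds_unique L (R.congr fun n => by
    rw [(finite_jtp hQ h0 hx n).tsum_eq, Finset.prod_mul_distrib]
    simp)
  rw [tsum_mul_left, inv_mul_eq_iff_eq_mul₀ hP] at this
  rw [this]; ring

/-! ### theta series -/

noncomputable def th (s q : ℂ) (A B : ℤ) : ℂ := ∑' j : ℤ, s ^ j * q ^ (A * tri j + B * j)

noncomputable def TH (s q : ℂ) (a b : ℤ) : ℂ := ∑' j : ℤ, s ^ j * q ^ (a * j ^ 2 + b * j)

lemma TH_eq_th (s q : ℂ) (a b : ℤ) : TH s q a b = th s q (2 * a) (a + b) := by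
  unfold TH th
  refine tsum_congr fun j => ?_
  congr 2
  linear_combination (-a) * two_tri j

lemma th_term {s q : ℂ} (h0 : q ≠ 0) (A B j : ℤ) :
    s ^ j * q ^ (A * tri j + B * j) = (q ^ A) ^ tri j * (s * q ^ B) ^ j := by
  rw [mul_zpow, ← zpow_mul, ← zpow_mul, zpow_add₀ h0]
  ring

lemma summable_th {s q : ℂ} (hq : ‖q‖ < 1) (h0 : q ≠ 0) (hs : s ≠ 0) {A : ℕ} (hA : 0 < A) (B : ℤ) :
    Summable (fun j : ℤ => ‖s ^ j * q ^ ((A:ℤ) * tri j + B * j)‖) := by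
  have h1 : ‖q ^ (A:ℤ)‖ < 1 := by
    rw [zpow_natCast, norm_pow]; exact pow_lt_one₀ (norm_nonneg _) hq hA.ne'
  refine (summable_theta (x := s * q ^ B) h1 (zpow_ne_zero _ h0)
    (mul_ne_zero hs (zpow_ne_zero _ h0))).congr fun j => ?_
  rw [th_term h0]

lemma summable_TH {s q : ℂ} (hq : ‖q‖ < 1) (h0 : q ≠ 0) (hs : s ≠ 0) {a : ℕ} (ha : 0 < a) (b : ℤ) :
    Summable (fun j : ℤ => ‖s ^ j * q ^ ((a:ℤ) * j ^ 2 + b * j)‖) := by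
  refine (summable_th (A := 2 * a) hq h0 hs (by omega) (a + b)).congr fun j => ?_
  congr 3
  push_cast
  linear_combination (a:ℤ) * two_tri j

lemma pr_pow (c q : ℂ) (s m a : ℕ) : pr c (q ^ s) m a = pr c q (s * m) (s * a) := by
  unfold pr
  refine tprod_congr fun k => ?_
  rw [← pow_mul]
  congr 3
  ring

lemma th_eq {s q : ℂ} (hq : ‖q‖ < 1) (h0 : q ≠ 0) (hs : s * s = 1) {A B C : ℕ} (hA : 0 < A)
    (hC : B + C = A) :
    th s q A B = pr (-1) q A A * pr s q A B * pr s q A C := by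
  have hs0 : s ≠ 0 := by rintro rfl; simp at hs
  have hsi : s⁻¹ = s := inv_eq_of_mul_eq_one_left hs
  have h1 : ‖q ^ A‖ < 1 := by
    rw [norm_pow]; exact pow_lt_one₀ (norm_nonneg _) hq hA.ne'
  have hx : s * q ^ B ≠ 0 := mul_ne_zero hs0 (pow_ne_zero _ h0)
  have := jtp h1 (pow_ne_zero _ h0) hx
  unfold th
  simp_rw [th_term h0, zpow_natCast]
  rw [this, pr_pow]
  have e1 : pr (s * q ^ B) (q ^ A) 1 0 = pr s q A B := by
    unfold pr
    refine tprod_congr fun k => ?_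
    rw [← pow_mul]; ring
  have e2 : pr (s * q ^ B)⁻¹ (q ^ A) 1 1 = pr s q A C := by
    unfold pr
    refine tprod_congr fun k => ?_
    rw [← pow_mul, mul_inv, hsi, show A * (1 * k + 1) = B + (A * k + C) by rw [← hC]; ring, pow_add]
    field_simp
  rw [e1, e2]
  simp

lemma TH_neg {s : ℂ} (q : ℂ) (hs : s * s = 1) (a b : ℤ) : TH s q a (-b) = TH s q a b := by
  have hsi : s⁻¹ = s := inv_eq_of_mul_eq_one_left hs
  unfold TH
  rw [← (Equiv.neg ℤ).tsum_eq]
  refine tsum_congr fun j => ?_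
  simp only [Equiv.neg_apply]
  rw [zpow_neg, ← inv_zpow, hsi]
  congr 2
  ring

lemma TH_shift {s q : ℂ} (hs : s ≠ 0) (h0 : q ≠ 0) (a b : ℤ) :
    TH s q a b = s * q ^ (a + b) * TH s q a (b + 2 * a) := by
  unfold TH
  rw [← (Equiv.addRight (1:ℤ)).tsum_eq, ← tsum_mul_left]
  refine tsum_congr fun j => ?_
  simp only [Equiv.coe_addRight]
  rw [zpow_add_one₀ hs, show a * (j + 1) ^ 2 + b * (j + 1) = (a + b) + (a * j ^ 2 + (b + 2 * a) * j) by ring,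
    zpow_add₀ h0]
  ring

def evenOdd : ℤ ⊕ ℤ ≃ ℤ where
  toFun := Sum.elim (fun n => 2 * n) (fun n => 2 * n + 1)
  invFun n := if n % 2 = 0 then Sum.inl (n / 2) else Sum.inr (n / 2)
  left_inv := by
    rintro (n | n)
    · simp
    · have h : ¬ (2 * n + 1) % 2 = 0 := by omega
      exact (if_neg h).trans (congrArg Sum.inr (show (2 * n + 1) / 2 = n by omega))
  right_inv := by
    intro n
    by_cases h : n % 2 = 0
    · simp only [h, if_true, Sum.elim_inl]; omega
    · simp only [h, if_false, Sum.elim_inr]; omega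

lemma tsum_evenOdd {f : ℤ → ℂ} (hf : Summable f) :
    ∑' n, f n = ∑' n, f (2 * n) + ∑' n, f (2 * n + 1) := by
  have h := evenOdd.summable_iff.mpr hf
  rw [← evenOdd.tsum_eq]
  have i1 : Function.Injective (fun n : ℤ => 2 * n) := fun a b h => by
    simp only at h; omega
  have i2 : Function.Injective (fun n : ℤ => 2 * n + 1) := fun a b h => by
    simp only at h; omega
  exact Summable.tsum_sum (f := f ∘ evenOdd) (hf.comp_injective i1) (hf.comp_injective i2)

lemma th_dissect {q : ℂ} (hq : ‖q‖ < 1) (h0 : q ≠ 0) (b : ℤ) :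
    th (-1) q 5 b = TH 1 q 10 (2 * b - 5) - q ^ b * TH 1 q 10 (2 * b + 5) := by
  have hs := (summable_th (s := -1) (A := 5) hq h0 (by simp) (by omega) b).of_norm
  unfold th
  rw [tsum_evenOdd (by simpa using hs), sub_eq_add_neg]
  have t0 : ∀ n, tri (2 * n) = 2 * n ^ 2 - n := fun n => by linarith [two_tri (2 * n)]
  congr 1
  · unfold TH
    refine tsum_congr fun n => ?_
    rw [t0, zpow_mul]
    norm_num
    congr 1
    ring
  · unfold TH
    rw [← neg_mul, ← tsum_mul_left]
    refine tsum_congr fun n => ?_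
    rw [tri_succ, t0, zpow_add_one₀ (by simp), zpow_mul,
      show 5 * (2 * n ^ 2 - n + 2 * n) + b * (2 * n + 1) = b + (10 * n ^ 2 + (2 * b + 5) * n) by ring,
      zpow_add₀ h0]
    norm_num

def fiveEquiv : Fin 5 × (ℤ × ℤ) ≃ ℤ × ℤ where
  toFun p := (p.2.1 + 2 * p.2.2, p.2.2 + (p.1.val : ℤ) - 2 * p.2.1)
  invFun p := (⟨((p.2 + 2 * p.1) % 5).toNat, by omega⟩,
    (p.1 - 2 * ((p.2 + 2 * p.1) / 5), (p.2 + 2 * p.1) / 5))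
  left_inv := by
    rintro ⟨⟨d, hd⟩, n, k⟩
    simp only [Prod.mk.injEq, Fin.mk.injEq]
    refine ⟨?_, ?_, ?_⟩ <;> omega
  right_inv := by
    rintro ⟨n, k⟩
    simp only [Prod.mk.injEq]
    refine ⟨?_, ?_⟩ <;> omega

lemma split5 {g h : ℤ → ℂ} (hg : Summable fun n => ‖g n‖) (hh : Summable fun n => ‖h n‖) :
    (∑' n, g n) * (∑' n, h n) =
      ∑ d : Fin 5, ∑' p : ℤ × ℤ, g (p.1 + 2 * p.2) * h (p.2 + (d.val : ℤ) - 2 * p.1) := by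
  have hs := summable_mul_of_summable_norm hg hh
  rw [tsum_mul_tsum_of_summable_norm hg hh, ← fiveEquiv.tsum_eq]
  have hs' := fiveEquiv.summable_iff.mpr hs
  have := hs'.tsum_prod
  simp only [Function.comp] at this
  rw [this, tsum_fintype]
  rfl

lemma TH_mul {s t q : ℂ} (hq : ‖q‖ < 1) (h0 : q ≠ 0) (hs : s ≠ 0) (ht : t ≠ 0) {a : ℕ} (ha : 0 < a)
    (b c : ℤ) : TH s q a b * TH t q a c = ∑' p : ℤ × ℤ, (s ^ p.1 * q ^ ((a:ℤ) * p.1 ^ 2 + b * p.1)) *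
      (t ^ p.2 * q ^ ((a:ℤ) * p.2 ^ 2 + c * p.2)) :=
  tsum_mul_tsum_of_summable_norm (summable_TH hq h0 hs ha b) (summable_TH hq h0 ht ha c)

lemma split_one {q : ℂ} (hq : ‖q‖ < 1) (h0 : q ≠ 0) :
    TH 1 q 2 1 * TH (-1) q 2 0 =
      ∑ d : Fin 5, (-1) ^ d.val * q ^ (2 * (d.val:ℤ) ^ 2) *
        (TH 1 q 10 (1 - 8 * d.val) * TH (-1) q 10 (2 + 4 * d.val)) := by
  have e := split5 (summable_TH (s := 1) (a := 2) hq h0 (by simp) (by omega) 1)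
    (summable_TH (s := -1) (a := 2) hq h0 (by simp) (by omega) 0)
  simp only [Nat.cast_ofNat] at e
  unfold TH at *
  rw [e]
  refine Finset.sum_congr rfl fun d _ => ?_
  have m := TH_mul (s := 1) (t := -1) (a := 10) hq h0 (by simp) (by simp) (by omega)
    (1 - 8 * d.val) (2 + 4 * d.val)
  unfold TH at m
  simp only [Nat.cast_ofNat] at m
  rw [m, ← tsum_mul_left]
  refine tsum_congr fun p => ?_
  obtain ⟨n, k⟩ := p
  simp only [one_zpow, one_mul]
  have hsgn : (-1 : ℂ) ^ (k + (d.val:ℤ) - 2 * n) = (-1) ^ d.val * (-1) ^ k := by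
    rw [zpow_sub₀ (by simp), zpow_add₀ (by simp), zpow_mul, zpow_natCast]
    norm_num; ring
  rw [hsgn]
  have hexp : q ^ (2 * (n + 2 * k) ^ 2 + (n + 2 * k)) * q ^ (2 * (k + (d.val:ℤ) - 2 * n) ^ 2 + 0 * (k + (d.val:ℤ) - 2 * n))
     = q ^ (2 * (d.val:ℤ) ^ 2) * (q ^ (10 * n ^ 2 + (1 - 8 * (d.val:ℤ)) * n) * q ^ (10 * k ^ 2 + (2 + 4 * (d.val:ℤ)) * k)) := by
    rw [← zpow_add₀ h0, ← zpow_add₀ h0, ← zpow_add₀ h0]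
    congr 1
    ring
  linear_combination ((-1) ^ d.val * (-1) ^ k) * hexp

lemma split_two {q : ℂ} (hq : ‖q‖ < 1) (h0 : q ≠ 0) :
    TH 1 q 1 0 * TH 1 q 1 0 =
      ∑ d : Fin 5, q ^ ((d.val:ℤ) ^ 2) * (TH 1 q 5 (-4 * d.val) * TH 1 q 5 (2 * d.val)) := by
  have e := split5 (summable_TH (s := 1) (a := 1) hq h0 (by simp) (by omega) 0)
    (summable_TH (s := 1) (a := 1) hq h0 (by simp) (by omega) 0)
  simp only [Nat.cast_one] at e
  unfold TH at *
  rw [e]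
  refine Finset.sum_congr rfl fun d _ => ?_
  have m := TH_mul (s := 1) (t := 1) (a := 5) hq h0 (by simp) (by simp) (by omega)
    (-4 * d.val) (2 * d.val)
  unfold TH at m
  simp only [Nat.cast_ofNat] at m
  rw [m, ← tsum_mul_left]
  refine tsum_congr fun p => ?_
  obtain ⟨n, k⟩ := p
  simp only [one_zpow, one_mul]
  rw [← zpow_add₀ h0, ← zpow_add₀ h0, ← zpow_add₀ h0]
  congr 1
  ring

lemma series_one {q : ℂ} (hq : ‖q‖ < 1) (h0 : q ≠ 0) :
    th (-1) q 5 2 * TH (-1) q 10 (-2) + q * (th (-1) q 5 1 * TH (-1) q 10 (-6)) =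
      TH 1 q 2 1 * TH (-1) q 2 0 := by
  have m1 : (-1 : ℂ) * -1 = 1 := by norm_num
  have n1 : (-1 : ℂ) ≠ 0 := by norm_num
  rw [split_one hq h0, th_dissect hq h0, th_dissect hq h0]
  simp only [Fin.sum_univ_five]
  norm_num
  have a1 := TH_neg q (s := 1) (by simp) 10 1
  have a2 := TH_neg q (s := 1) (by simp) 10 7
  have a3 := TH_neg q (s := 1) (by simp) 10 3
  have a4 := TH_neg q m1 10 2
  have a5 := TH_neg q m1 10 6
  have b0 := TH_shift n1 h0 10 (-10)
  have b0' := TH_neg q m1 10 10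
  have b1 := TH_shift n1 h0 10 (-6)
  have b2 := TH_shift n1 h0 10 (-2)
  have b3 := TH_shift one_ne_zero h0 10 (-23)
  have b4 := TH_shift one_ne_zero h0 10 (-31)
  have b5 := TH_shift one_ne_zero h0 10 (-11)
  norm_num at a1 a2 a3 a4 a5 b0 b0' b1 b2 b3 b4 b5
  have c0 : TH (-1) q 10 10 = 0 := by linear_combination (b0 - b0') / 2
  have c1 : TH (-1) q 10 14 = -(q ^ 4)⁻¹ * TH (-1) q 10 6 := by
    rw [← a5, b1]; field_simp
  have c2 : TH (-1) q 10 18 = -(q ^ 8)⁻¹ * TH (-1) q 10 2 := by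
    rw [← a4, b2]; field_simp
  rw [b3, b4, b5, c0, c1, c2, a1, a2, a3, a4, a5]
  field_simp
  ring

lemma series_two {q : ℂ} (hq : ‖q‖ < 1) (h0 : q ≠ 0) :
    TH 1 q 1 0 ^ 2 = TH 1 q 5 0 ^ 2 + 4 * q * (TH 1 q 5 (-4) * TH 1 q 5 (-2)) := by
  rw [sq, split_two hq h0]
  simp only [Fin.sum_univ_five]
  norm_num
  have a1 := TH_neg q (s := 1) (by simp) 5 2
  have a2 := TH_neg q (s := 1) (by simp) 5 4
  have b1 := TH_shift one_ne_zero h0 5 (-8)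
  have b2 := TH_shift one_ne_zero h0 5 (-12)
  have b3 := TH_shift one_ne_zero h0 5 (-4)
  have b4 := TH_shift one_ne_zero h0 5 (-16)
  have b5 := TH_shift one_ne_zero h0 5 (-6)
  have b6 := TH_shift one_ne_zero h0 5 (-2)
  norm_num at a1 a2 b1 b2 b3 b4 b5 b6
  have c1 : TH 1 q 5 6 = q⁻¹ * TH 1 q 5 4 := by
    rw [← a2, b3]; field_simp
  have c2 : TH 1 q 5 8 = (q ^ 3)⁻¹ * TH 1 q 5 2 := by
    rw [← a1, b6]; field_simp
  rw [b1, b2, b4, b5, c1, c2, a1, a2]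
  field_simp
  ring

/-! ### product identities -/

lemma pr_split2 (c : ℂ) {q : ℂ} (hq : ‖q‖ < 1) {m : ℕ} (hm : 0 < m) (a : ℕ) :
    pr c q m a = pr c q (2 * m) a * pr c q (2 * m) (m + a) := by
  have h := tendsto_pr c hq hm a
  have h1 := h.comp (tendsto_id.const_mul_atTop' (r := 2) two_pos)
  refine tendsto_nhds_unique h1 (((tendsto_pr c hq (m := 2 * m) (by omega) a).mul
    (tendsto_pr c hq (m := 2 * m) (by omega) (m + a))).congr fun n => ?_)
  simp only [Function.comp, id]
  induction n with
  | zero => simp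
  | succ n ih =>
    rw [show 2 * (n + 1) = 2 * n + 1 + 1 by ring]
    simp only [Finset.prod_range_succ]
    rw [← ih]
    ring

lemma pr_split5 (c : ℂ) {q : ℂ} (hq : ‖q‖ < 1) {m : ℕ} (hm : 0 < m) (a : ℕ) :
    pr c q m a = pr c q (5 * m) a * pr c q (5 * m) (m + a) * pr c q (5 * m) (2 * m + a) *
      pr c q (5 * m) (3 * m + a) * pr c q (5 * m) (4 * m + a) := by
  have h := tendsto_pr c hq hm a
  have h1 := h.comp (tendsto_id.const_mul_atTop' (r := 5) (by norm_num))
  have t := fun b => tendsto_pr c hq (m := 5 * m) (by omega) b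
  refine tendsto_nhds_unique h1 (((((t a).mul (t (m + a))).mul (t (2 * m + a))).mul
    (t (3 * m + a))).mul (t (4 * m + a)) |>.congr fun n => ?_)
  simp only [Function.comp, id]
  induction n with
  | zero => simp
  | succ n ih =>
    rw [show 5 * (n + 1) = 5 * n + 1 + 1 + 1 + 1 + 1 by ring]
    simp only [Finset.prod_range_succ]
    rw [← ih]
    ring

lemma pr_mul_neg {q : ℂ} (hq : ‖q‖ < 1) {m : ℕ} (hm : 0 < m) (a : ℕ) :
    pr 1 q m a * pr (-1) q m a = pr (-1) q (2 * m) (2 * a) := by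
  unfold pr
  rw [← (multipliable_pr 1 hq hm a).tprod_mul (multipliable_pr (-1) hq hm a)]
  refine tprod_congr fun k => ?_
  ring

lemma RRG_eq (q : ℂ) (s : ℕ) : RRG (q ^ s) =
    1 / (pr (-1) q (s * 5) (s * 1) * pr (-1) q (s * 5) (s * 4)) := by
  rw [← pr_pow, ← pr_pow]
  simp [RRG, pr, sub_eq_add_neg]

lemma RRH_eq (q : ℂ) (s : ℕ) : RRH (q ^ s) =
    1 / (pr (-1) q (s * 5) (s * 2) * pr (-1) q (s * 5) (s * 3)) := by
  rw [← pr_pow, ← pr_pow]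
  simp [RRH, pr, sub_eq_add_neg]

lemma rphi_eq (q : ℂ) : rphi q = TH 1 q 1 0 := by
  simp [rphi, TH]

lemma rphi5_eq (q : ℂ) : rphi (q ^ 5) = TH 1 q 5 0 := by
  unfold rphi TH
  refine tsum_congr fun n => ?_
  rw [← zpow_natCast, ← zpow_mul]
  simp

lemma P22_eq (q : ℂ) : ∏' n : ℕ, (1 - q ^ (2 * n + 2)) = pr (-1) q 2 2 := by
  simp [pr, sub_eq_add_neg]

lemma watson_core {q : ℂ} (hq : ‖q‖ < 1) (h0 : q ≠ 0) :
    (RRG q * RRG (q ^ 4) + q * RRH q * RRH (q ^ 4)) * pr (-1) q 2 2 = rphi q ∧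
    ((RRG q * RRG (q ^ 4) - q * RRH q * RRH (q ^ 4)) * pr (-1) q 2 2) ^ 2 = rphi (q ^ 5) ^ 2 := by
  have m1 : (-1 : ℂ) * -1 = 1 := by norm_num
  have o1 : (1 : ℂ) * 1 = 1 := by norm_num
  have ne : ∀ m a : ℕ, 0 < m → 0 < a → pr (-1) q m a ≠ 0 := fun m a hm ha =>
    pr_ne (by simp) hq hm ha
  have nM : pr 1 q 10 5 ≠ 0 := pr_ne (by simp) hq (by norm_num) (by norm_num)
  have G1 := RRG_eq q 1
  have H1 := RRH_eq q 1
  have G4 := RRG_eq q 4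
  have H4 := RRH_eq q 4
  have S1 := series_one hq h0
  have S2 := series_two hq h0
  simp only [TH_eq_th] at S1 S2
  have T1 := th_eq hq h0 m1 (A := 5) (B := 2) (C := 3) (by norm_num) rfl
  have T2 := th_eq hq h0 m1 (A := 5) (B := 1) (C := 4) (by norm_num) rfl
  have T3 := th_eq hq h0 m1 (A := 20) (B := 8) (C := 12) (by norm_num) rfl
  have T4 := th_eq hq h0 m1 (A := 20) (B := 4) (C := 16) (by norm_num) rfl
  have T5 := th_eq hq h0 o1 (A := 4) (B := 3) (C := 1) (by norm_num) rfl
  have T6 := th_eq hq h0 m1 (A := 4) (B := 2) (C := 2) (by norm_num) rfl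
  have T7 := th_eq hq h0 o1 (A := 2) (B := 1) (C := 1) (by norm_num) rfl
  have T8 := th_eq hq h0 o1 (A := 10) (B := 1) (C := 9) (by norm_num) rfl
  have T9 := th_eq hq h0 o1 (A := 10) (B := 3) (C := 7) (by norm_num) rfl
  have P1 := pr_split5 (-1) hq (m := 1) (by norm_num) 1
  have P2 := pr_split5 (-1) hq (m := 4) (by norm_num) 4
  have P3 := pr_split2 (-1) hq (m := 1) (by norm_num) 1
  have P4 := pr_split2 (-1) hq (m := 2) (by norm_num) 2
  have P5 := pr_split2 1 hq (m := 2) (by norm_num) 1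
  have P6 := pr_mul_neg hq (m := 2) (by norm_num) 1
  have P7 := pr_split5 1 hq (m := 2) (by norm_num) 1
  have P8 := pr_mul_neg hq (m := 10) (by norm_num) 5
  have P9 := pr_split2 (-1) hq (m := 5) (by norm_num) 5
  have P10 := pr_split2 (-1) hq (m := 10) (by norm_num) 10
  norm_num at S1 S2 T1 T2 T3 T4 T5 T6 T7 T8 T9 P1 P2 P3 P4 P5 P6 P7 P8 P9 P10 G1 H1 G4 H4
  rw [rphi_eq, rphi5_eq, TH_eq_th, TH_eq_th]
  norm_num
  have hf1 := ne 1 1 (by norm_num) (by norm_num)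
  have hf4 := ne 4 4 (by norm_num) (by norm_num)
  have n1 := ne 5 1 (by norm_num) (by norm_num)
  have n2 := ne 5 2 (by norm_num) (by norm_num)
  have n3 := ne 5 3 (by norm_num) (by norm_num)
  have n4 := ne 5 4 (by norm_num) (by norm_num)
  have r1 := ne 20 4 (by norm_num) (by norm_num)
  have r2 := ne 20 8 (by norm_num) (by norm_num)
  have r3 := ne 20 12 (by norm_num) (by norm_num)
  have r4 := ne 20 16 (by norm_num) (by norm_num)
  have KG : RRG q * RRG (q ^ 4) * (pr (-1) q 1 1 * pr (-1) q 4 4) = th (-1) q 5 2 * th (-1) q 20 8 := by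
    rw [G1, G4, P1, P2, T1, T3]; field_simp
  have KH : RRH q * RRH (q ^ 4) * (pr (-1) q 1 1 * pr (-1) q 4 4) = th (-1) q 5 1 * th (-1) q 20 4 := by
    rw [H1, H4, P1, P2, T2, T4]; field_simp
  have KGH : RRG q * RRG (q ^ 4) * (RRH q * RRH (q ^ 4)) * (pr (-1) q 1 1 * pr (-1) q 4 4) =
      pr (-1) q 5 5 * pr (-1) q 20 20 := by
    rw [G1, G4, H1, H4, P1, P2]; field_simp
  have E1 : pr 1 q 2 1 * (pr (-1) q 1 1 * pr (-1) q 4 4) = pr (-1) q 2 2 * pr (-1) q 2 2 := by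
    rw [P3, P4, ← P6]; ring
  have E5 : pr 1 q 10 5 * (pr (-1) q 5 5 * pr (-1) q 20 20) = pr (-1) q 10 10 * pr (-1) q 10 10 := by
    rw [P9, P10, ← P8]; ring
  have hff := mul_ne_zero hf1 hf4
  have F1 : (RRG q * RRG (q ^ 4) + q * RRH q * RRH (q ^ 4)) * pr (-1) q 2 2 = th 1 q 2 1 := by
    apply mul_right_cancel₀ hff
    have e : th 1 q 4 3 * th (-1) q 4 2 * pr (-1) q 2 2 =
        th 1 q 2 1 * (pr (-1) q 1 1 * pr (-1) q 4 4) := by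
      rw [T5, T6, T7, P3, P4, ← P6, P5]; ring
    rw [← e, ← S1, ← KG, ← KH]
    ring
  refine ⟨F1, ?_⟩
  have F2 : RRG q * RRG (q ^ 4) * (RRH q * RRH (q ^ 4)) * pr (-1) q 2 2 ^ 2 =
      th 1 q 10 1 * th 1 q 10 3 := by
    apply mul_right_cancel₀ (mul_ne_zero hff nM)
    have e : th 1 q 10 1 * th 1 q 10 3 * (pr (-1) q 1 1 * pr (-1) q 4 4 * pr 1 q 10 5) =
        pr (-1) q 10 10 * pr (-1) q 10 10 * (pr 1 q 2 1 * (pr (-1) q 1 1 * pr (-1) q 4 4)) := by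
      rw [T8, T9, P7]; ring
    rw [e, E1, ← E5]
    linear_combination (pr (-1) q 2 2 ^ 2 * pr 1 q 10 5) * KGH
  rw [← F1] at S2
  linear_combination S2 - 4 * q * F2

lemma pr_zero (c : ℂ) (m a : ℕ) (ha : 0 < a) : pr c 0 m a = 1 := by
  unfold pr
  have : ∀ k : ℕ, 1 + c * (0:ℂ) ^ (m * k + a) = 1 := fun k => by
    rw [zero_pow (by omega)]; simp
  simp [this]

lemma pr_continuousOn (c : ℂ) {m : ℕ} (hm : 0 < m) (a : ℕ) :
    ContinuousOn (fun q => pr c q m a) (Metric.ball 0 1) := by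
  have key : HasProdLocallyUniformlyOn (fun (k : ℕ) (q : ℂ) => 1 + c * q ^ (m * k + a))
      (fun q => ∏' k : ℕ, (1 + c * q ^ (m * k + a))) (Metric.ball 0 1) := by
    apply hasProdLocallyUniformlyOn_of_forall_compact Metric.isOpen_ball
    intro K hK hcK
    rcases K.eq_empty_or_nonempty with hN | hN
    · simpa [hasProdUniformlyOn_iff_tendstoUniformlyOn, hN] using tendstoUniformlyOn_empty
    · obtain ⟨q₀, hq₀, _, HB⟩ := hcK.exists_sSup_image_eq_and_ge hN
        (show ContinuousOn (fun q : ℂ ↦ ‖q‖) K by fun_prop)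
      refine (summable_pr c (q := q₀) (by simpa using hK hq₀) hm a).hasProdUniformlyOn_nat_one_add
        hcK (.of_forall fun n x hx ↦ ?_) (fun _ ↦ by fun_prop)
      rw [norm_mul, norm_mul, norm_pow, norm_pow]
      exact mul_le_mul_of_nonneg_left (pow_le_pow_left₀ (norm_nonneg _) (HB x hx) _) (norm_nonneg _)
  refine TendstoLocallyUniformlyOn.continuousOn key (Frequently.of_forall fun s => ?_)
  fun_prop

lemma RR_zero : RRG 0 = 1 ∧ RRH 0 = 1 := by
  have h1 := RRG_eq 0 1
  have h2 := RRH_eq 0 1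
  rw [pr_zero _ _ _ (by norm_num), pr_zero _ _ _ (by norm_num)] at h1 h2
  simpa using And.intro h1 h2

lemma rphi_zero : rphi 0 = 1 := by
  unfold rphi
  rw [tsum_eq_single 0]
  · simp
  · intro n hn
    exact zero_zpow _ (pow_ne_zero 2 hn)

lemma RRG_cont {s : ℕ} (hs : 0 < s) : ContinuousOn (fun q => RRG (q ^ s)) (Metric.ball 0 1) := by
  simp only [RRG_eq]
  refine ContinuousOn.div continuousOn_const ((pr_continuousOn _ (by omega) _).mul
    (pr_continuousOn _ (by omega) _)) fun q hq => ?_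
  have hq : ‖q‖ < 1 := by simpa using hq
  exact mul_ne_zero (pr_ne (by simp) hq (by omega) (by omega)) (pr_ne (by simp) hq (by omega) (by omega))

lemma RRH_cont {s : ℕ} (hs : 0 < s) : ContinuousOn (fun q => RRH (q ^ s)) (Metric.ball 0 1) := by
  simp only [RRH_eq]
  refine ContinuousOn.div continuousOn_const ((pr_continuousOn _ (by omega) _).mul
    (pr_continuousOn _ (by omega) _)) fun q hq => ?_
  have hq : ‖q‖ < 1 := by simpa using hq
  exact mul_ne_zero (pr_ne (by simp) hq (by omega) (by omega)) (pr_ne (by simp) hq (by omega) (by omega))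

lemma rphi5_pr {q : ℂ} (hq : ‖q‖ < 1) :
    rphi (q ^ 5) = pr (-1) q 10 10 * pr 1 q 10 5 * pr 1 q 10 5 := by
  by_cases h0 : q = 0
  · subst h0
    rw [pr_zero _ _ _ (by norm_num), pr_zero _ _ _ (by norm_num)]
    simp [rphi_zero]
  · have T := th_eq hq h0 (s := 1) (by norm_num) (A := 10) (B := 5) (C := 5) (by norm_num) rfl
    rw [rphi5_eq, TH_eq_th]
    norm_num at T ⊢
    exact T

lemma watson_two {q : ℂ} (hq : ‖q‖ < 1) :
    (RRG q * RRG (q ^ 4) - q * RRH q * RRH (q ^ 4)) * pr (-1) q 2 2 = rphi (q ^ 5) := by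
  have cG1 : ContinuousOn RRG (Metric.ball 0 1) := by simpa using RRG_cont one_pos
  have cH1 : ContinuousOn RRH (Metric.ball 0 1) := by simpa using RRH_cont one_pos
  have cG4 := RRG_cont (s := 4) (by norm_num)
  have cH4 := RRH_cont (s := 4) (by norm_num)
  have cf : ContinuousOn (fun q => (RRG q * RRG (q ^ 4) - q * RRH q * RRH (q ^ 4)) * pr (-1) q 2 2)
      (Metric.ball 0 1) :=
    ((cG1.mul cG4).sub ((continuousOn_id.mul cH1).mul cH4)).mul (pr_continuousOn _ (by norm_num) _)
  have cg : ContinuousOn (fun q => rphi (q ^ 5)) (Metric.ball 0 1) := by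
    refine (((pr_continuousOn (-1) (m := 10) (by norm_num) 10).mul
      (pr_continuousOn 1 (m := 10) (by norm_num) 5)).mul
      (pr_continuousOn 1 (m := 10) (by norm_num) 5)).congr fun q hq => ?_
    exact rphi5_pr (by simpa using hq)
  have z1 : (RRG 0 * RRG (0 ^ 4) - 0 * RRH 0 * RRH (0 ^ 4)) * pr (-1) 0 2 2 = 1 := by
    rw [pr_zero _ _ _ (by norm_num)]
    simp [RR_zero.1]
  have z2 : rphi (0 ^ 5) = 1 := by simp [rphi_zero]
  have hpre : IsPreconnected (Metric.ball (0:ℂ) 1) := (convex_ball 0 1).isPreconnected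
  rcases hpre.eq_or_eq_neg_of_sq_eq cf cg (fun q hq => by
      have hq : ‖q‖ < 1 := by simpa using hq
      simp only [Pi.pow_apply]
      by_cases h0 : q = 0
      · subst h0
        rw [z1, z2]
      · exact (watson_core hq h0).2) (fun {q} hq => by
      have hq : ‖q‖ < 1 := by simpa using hq
      rw [rphi5_pr hq]
      exact mul_ne_zero (mul_ne_zero (pr_ne (by simp) hq (by norm_num) (by norm_num))
        (pr_ne (by simp) hq (by norm_num) (by norm_num))) (pr_ne (by simp) hq (by norm_num) (by norm_num)))
    with h | h
  · exact h (by simpa using hq)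
  · have := h (show (0:ℂ) ∈ Metric.ball (0:ℂ) 1 by simp)
    simp only [Pi.neg_apply] at this
    rw [z1, z2] at this
    norm_num at this

/-- Watson's identities:
`G(q)G(q⁴) + q H(q)H(q⁴) = φ(q)/(q²;q²)_∞` and
`G(q)G(q⁴) − q H(q)H(q⁴) = φ(q⁵)/(q²;q²)_∞`. -/
theorem watson_GG_HH (q : ℂ) (hq : ‖q‖ < 1) :
    RRG q * RRG (q ^ 4) + q * RRH q * RRH (q ^ 4) =
        rphi q / ∏' n : ℕ, (1 - q ^ (2 * n + 2)) ∧
      RRG q * RRG (q ^ 4) - q * RRH q * RRH (q ^ 4) =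
        rphi (q ^ 5) / ∏' n : ℕ, (1 - q ^ (2 * n + 2)) := by
  have hne : pr (-1) q 2 2 ≠ 0 := pr_ne (by simp) hq (by norm_num) (by norm_num)
  rw [P22_eq]
  refine ⟨?_, ?_⟩
  · rw [eq_div_iff hne]
    by_cases h0 : q = 0
    · subst h0
      rw [pr_zero _ _ _ (by norm_num)]
      simp [RR_zero.1, rphi_zero]
    · exact (watson_core hq h0).1
  · rw [eq_div_iff hne]
    exact watson_two hq
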